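/- arXiv:2503.08297 — 7 statements merged into one kernel-verified Lean document; each statement's English description precedes it below -/
import Mathlib

section
/- For every ε > 0 and every v ∈ [0,1], if X is a real random variable whose law has density ρ of the SW mechanism with input v, then E[(X − q/2 − q·b)/(2b(p−q))] = v; that is, the unbiased SW estimator A_usw(v) = (A_sw(v) − q/2 − qb)/(2b(p−q)) is an unbiased estimator of v. -/
open Real MeasureTheory

/-- The unbiased SW estimator `A_usw(v) = (A_sw(v) − q/2 − qb)/(2b(p−q))` is an unbiased
estimator of `v`: if `X` has the SW density with input `v`, then
`E[(X − q/2 − q·b)/(2b(p−q))] = v`. -/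
theorem sw_unbiased_estimator {Ω : Type*} [MeasureSpace Ω]
    [IsProbabilityMeasure (volume : Measure Ω)]
    (ε : ℝ) (hε : 0 < ε) (v : ℝ) (hv : v ∈ Set.Icc (0 : ℝ) 1)
    (b p q : ℝ)
    (hb : b = (ε * exp ε - exp ε + 1) / (2 * exp ε * (exp ε - ε - 1)))
    (hp : p = exp ε / (2 * b * exp ε + 1))
    (hq : q = 1 / (2 * b * exp ε + 1))
    (X : Ω → ℝ)
    (hX : Measure.map X volume =
      (volume : Measure ℝ).withDensity (fun x => ENNReal.ofReal
        (if x ∈ Set.Icc (v - b) (v + b) then p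
         else if x ∈ Set.Icc (-b) (1 + b) then q else 0))) :
    (∫ ω, (X ω - q / 2 - q * b) / (2 * b * (p - q))) = v := by
  obtain ⟨hv0, hv1⟩ := hv
  have hE : 0 < exp ε := exp_pos ε
  have h1 : 0 < exp ε - ε - 1 := by
    have := add_one_lt_exp hε.ne'
    linarith
  have h2 : 0 < ε * exp ε - exp ε + 1 := by
    have h := add_one_lt_exp (neg_ne_zero.mpr hε.ne')
    have h3 : exp (-ε) * exp ε = 1 := by rw [← exp_add]; simp
    nlinarith
  have hb0 : 0 < b := by rw [hb]; positivity
  have hD : 0 < 2 * b * exp ε + 1 := by positivity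
  have hp0 : 0 < p := by rw [hp]; positivity
  have hq0 : 0 < q := by rw [hq]; positivity
  have hpq : 0 < p - q := by
    rw [hp, hq, ← sub_div]
    have : 1 < exp ε := one_lt_exp_iff.mpr hε
    exact div_pos (by linarith) hD
  have htot : 2 * b * p + q = 1 := by
    rw [hp, hq]; field_simp
  set f : ℝ → ℝ := fun x => if x ∈ Set.Icc (v - b) (v + b) then p
         else if x ∈ Set.Icc (-b) (1 + b) then q else 0 with hf
  have hfm : Measurable f := by
    refine Measurable.ite measurableSet_Icc measurable_const ?_
    exact Measurable.ite measurableSet_Icc measurable_const measurable_const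
  have hf0 : ∀ x, 0 ≤ f x := by
    intro x; simp only [hf]; split_ifs <;> linarith
  have hXm : AEMeasurable X volume := by
    by_contra hne
    rw [Measure.map_of_not_aemeasurable hne] at hX
    have hz := (withDensity_eq_zero_iff (hfm.ennreal_ofReal.aemeasurable)).1 hX.symm
    have hz' : volume {x | ¬ (ENNReal.ofReal (f x) = 0)} = 0 := hz
    have hsub : Set.Icc (v - b) (v + b) ⊆ {x | ¬ (ENNReal.ofReal (f x) = 0)} := by
      intro x hx
      simp only [Set.mem_ofPred_eq, hf, if_pos hx, ENNReal.ofReal_eq_zero, not_le]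
      exact hp0
    have := measure_mono_null hsub hz'
    rw [Real.volume_Icc, ENNReal.ofReal_eq_zero] at this
    linarith
  set g : ℝ → ℝ := fun x => (x - q / 2 - q * b) / (2 * b * (p - q)) with hg
  have hgc : Continuous g := by simp only [hg]; fun_prop
  have e1 : (∫ ω, (X ω - q / 2 - q * b) / (2 * b * (p - q))) = ∫ x, g x ∂(Measure.map X volume) :=
    (integral_map hXm hgc.aestronglyMeasurable).symm
  rw [e1, hX, integral_withDensity_eq_integral_toReal_smul hfm.ennreal_ofReal
    (by filter_upwards with x using ENNReal.ofReal_lt_top)]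
  have e2 : ∀ x, (ENNReal.ofReal (f x)).toReal • g x =
      (Set.Icc (-b) (1 + b)).indicator (fun x => q * g x) x +
      (Set.Icc (v - b) (v + b)).indicator (fun x => (p - q) * g x) x := by
    intro x
    rw [ENNReal.toReal_ofReal (hf0 x), smul_eq_mul]
    by_cases hx : x ∈ Set.Icc (v - b) (v + b)
    · have hx' : x ∈ Set.Icc (-b) (1 + b) := ⟨by linarith [hx.1], by linarith [hx.2]⟩
      rw [Set.indicator_of_mem hx, Set.indicator_of_mem hx']
      simp only [hf, if_pos hx]; ring
    · rw [Set.indicator_of_notMem hx]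
      by_cases hx' : x ∈ Set.Icc (-b) (1 + b)
      · rw [Set.indicator_of_mem hx']
        simp only [hf, if_neg hx, if_pos hx']; ring
      · rw [Set.indicator_of_notMem hx']
        simp only [hf, if_neg hx, if_neg hx']; ring
  have e3 : ∀ c d : ℝ, c ≤ d → ∀ k : ℝ,
      ∫ x, (Set.Icc c d).indicator (fun x => k * g x) x =
        k * (((d ^ 2 - c ^ 2) / 2 - (d - c) * (q / 2 + q * b)) / (2 * b * (p - q))) := by
    intro c d hcd k
    rw [integral_indicator measurableSet_Icc, integral_Icc_eq_integral_Ioc,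
      ← intervalIntegral.integral_of_le hcd, intervalIntegral.integral_const_mul]
    simp only [hg]
    rw [intervalIntegral.integral_div]
    have : ∀ x : ℝ, x - q / 2 - q * b = x - (q / 2 + q * b) := fun x => by ring
    simp only [this]
    rw [intervalIntegral.integral_sub (by simp) (by simp)]
    simp
    left
    congr 1
    ring
  have e4 : ∀ c d k : ℝ, Integrable ((Set.Icc c d).indicator (fun x => k * g x)) := by
    intro c d k
    rw [integrable_indicator_iff measurableSet_Icc]
    exact (continuous_const.mul hgc).continuousOn.integrableOn_Icc
  simp only [e2]
  rw [integral_add (e4 _ _ _) (e4 _ _ _), e3 _ _ (by linarith), e3 _ _ (by linarith)]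
  have hne : 2 * b * (p - q) ≠ 0 := by positivity
  rw [← mul_div_assoc, ← mul_div_assoc, ← add_div, div_eq_iff hne]
  linear_combination (-(q / 2 + q * b)) * htot
end

section
/- For every ε > 0 and every v ∈ [0,1], if X is a real random variable whose law has density ρ of the SW mechanism with input v, then its variance satisfies Var(X) = q·(b³ − (b+v)³ − (b−v)³ + (b+1)³)/3 − (q + 2bq + 4bpv − 4bqv)²/4 + 2bp(b² + 3v²)/3. -/
open Real MeasureTheory ProbabilityTheory


lemma sw_aux (v b p q : ℝ) (hv : v ∈ Set.Icc (0 : ℝ) 1) (hb : 0 < b) (hp : 0 < p) (hq : 0 < q)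
    (g : ℝ → ℝ) (hg : Continuous g) :
    Integrable g ((volume : Measure ℝ).withDensity (fun x => ENNReal.ofReal
        (if x ∈ Set.Icc (v - b) (v + b) then p
         else if x ∈ Set.Icc (-b) (1 + b) then q else 0))) ∧
    ∫ x, g x ∂((volume : Measure ℝ).withDensity (fun x => ENNReal.ofReal
        (if x ∈ Set.Icc (v - b) (v + b) then p
         else if x ∈ Set.Icc (-b) (1 + b) then q else 0))) =
      q * (∫ x in (-b)..(1 + b), g x) + (p - q) * ∫ x in (v - b)..(v + b), g x := by
  obtain ⟨h0, h1⟩ := hv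
  have hm : Measurable (fun x : ℝ => ENNReal.ofReal
        (if x ∈ Set.Icc (v - b) (v + b) then p
         else if x ∈ Set.Icc (-b) (1 + b) then q else 0)) := by
    apply Measurable.ennreal_ofReal
    exact Measurable.ite measurableSet_Icc measurable_const
      (Measurable.ite measurableSet_Icc measurable_const measurable_const)
  have hlt : ∀ᵐ x : ℝ, ENNReal.ofReal
        (if x ∈ Set.Icc (v - b) (v + b) then p
         else if x ∈ Set.Icc (-b) (1 + b) then q else 0) < ⊤ :=
    Filter.Eventually.of_forall fun x => ENNReal.ofReal_lt_top
  have key : (fun x : ℝ => (ENNReal.ofReal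
        (if x ∈ Set.Icc (v - b) (v + b) then p
         else if x ∈ Set.Icc (-b) (1 + b) then q else 0)).toReal • g x) =
      fun x => (Set.Icc (-b) (1 + b)).indicator (fun x => q * g x) x
        + (Set.Icc (v - b) (v + b)).indicator (fun x => (p - q) * g x) x := by
    funext x
    rw [ENNReal.toReal_ofReal (by split_ifs <;> linarith)]
    simp only [Set.indicator, smul_eq_mul]
    by_cases hx : x ∈ Set.Icc (v - b) (v + b)
    · have hx2 : x ∈ Set.Icc (-b) (1 + b) := ⟨by linarith [hx.1], by linarith [hx.2]⟩
      simp only [hx, hx2, if_true]; ring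
    · simp only [hx, if_false]; split_ifs <;> ring
  have i1 : Integrable ((Set.Icc (-b) (1 + b)).indicator (fun x => q * g x)) := by
    rw [integrable_indicator_iff measurableSet_Icc]
    exact (continuous_const.mul hg).continuousOn.integrableOn_Icc
  have i2 : Integrable ((Set.Icc (v - b) (v + b)).indicator (fun x => (p - q) * g x)) := by
    rw [integrable_indicator_iff measurableSet_Icc]
    exact (continuous_const.mul hg).continuousOn.integrableOn_Icc
  constructor
  · rw [integrable_withDensity_iff_integrable_smul' hm hlt, key]
    exact i1.add i2
  · rw [integral_withDensity_eq_integral_toReal_smul hm hlt, key, integral_add i1 i2,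
      integral_indicator measurableSet_Icc, integral_indicator measurableSet_Icc,
      integral_const_mul, integral_const_mul, integral_Icc_eq_integral_Ioc,
      integral_Icc_eq_integral_Ioc, ← intervalIntegral.integral_of_le (by linarith),
      ← intervalIntegral.integral_of_le (by linarith)]

/-- Variance of the SW mechanism: if `X` has the SW density with input `v`, then
`Var(X) = q(b³ − (b+v)³ − (b−v)³ + (b+1)³)/3 − (q + 2bq + 4bpv − 4bqv)²/4 + 2bp(b² + 3v²)/3`. -/
theorem sw_variance {Ω : Type*} [MeasureSpace Ω]
    [IsProbabilityMeasure (volume : Measure Ω)]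
    (ε : ℝ) (hε : 0 < ε) (v : ℝ) (hv : v ∈ Set.Icc (0 : ℝ) 1)
    (b p q : ℝ)
    (hb : b = (ε * exp ε - exp ε + 1) / (2 * exp ε * (exp ε - ε - 1)))
    (hp : p = exp ε / (2 * b * exp ε + 1))
    (hq : q = 1 / (2 * b * exp ε + 1))
    (X : Ω → ℝ)
    (hX : Measure.map X volume =
      (volume : Measure ℝ).withDensity (fun x => ENNReal.ofReal
        (if x ∈ Set.Icc (v - b) (v + b) then p
         else if x ∈ Set.Icc (-b) (1 + b) then q else 0))) :
    variance X volume =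
      q * (b ^ 3 - (b + v) ^ 3 - (b - v) ^ 3 + (b + 1) ^ 3) / 3 -
        (q + 2 * b * q + 4 * b * p * v - 4 * b * q * v) ^ 2 / 4 +
        2 * b * p * (b ^ 2 + 3 * v ^ 2) / 3 := by
  have hE := exp_pos ε
  have e1 : 0 < exp ε - ε - 1 := by linarith [add_one_lt_exp hε.ne']
  have e2 : 0 < ε * exp ε - exp ε + 1 := by
    have h1 := add_one_lt_exp (neg_ne_zero.mpr hε.ne')
    have h2 : exp (-ε) * exp ε = 1 := by rw [← exp_add]; simp
    nlinarith
  have b0 : 0 < b := by rw [hb]; positivity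
  have p0 : 0 < p := by rw [hp]; positivity
  have q0 : 0 < q := by rw [hq]; positivity
  have A := sw_aux v b p q hv b0 p0 q0
  rw [← hX] at A
  have hXm : AEMeasurable X volume := by
    by_contra hn
    have := (A (fun _ => 1) continuous_const).2
    rw [Measure.map_of_not_aemeasurable hn] at this
    simp at this
    nlinarith [mul_pos p0 b0]
  have hid : AEStronglyMeasurable (fun x : ℝ => x) (Measure.map X volume) :=
    measurable_id.aestronglyMeasurable
  have I1 := (A (fun x => x) continuous_id).2
  have A2 := A (fun x => x ^ 2) (continuous_pow 2)
  have hL : MemLp X 2 volume := by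
    have : MemLp (fun x : ℝ => x) 2 (Measure.map X volume) :=
      (memLp_two_iff_integrable_sq hid).2 A2.1
    exact (memLp_map_measure_iff hid hXm).1 this
  have I2 := A2.2
  rw [integral_map hXm hid] at I1
  rw [integral_map hXm (continuous_pow 2).aestronglyMeasurable] at I2
  rw [variance_eq_sub hL]
  simp only [Pi.pow_apply]
  rw [I1, I2]
  simp only [integral_id, integral_pow]
  push_cast
  ring
end

section
/- The SW mechanism satisfies ε-local differential privacy: for every ε > 0, all inputs v, v' ∈ [0,1], and every output x ∈ [−b, 1+b], the densities satisfy ρ_v(x) ≤ e^ε · ρ_{v'}(x), where ρ_v denotes the SW density with input v. -/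
open Real

/-- The SW mechanism satisfies `ε`-local differential privacy: for all inputs
`v, v' ∈ [0,1]` and every output `x ∈ [−b, 1+b]`, the densities satisfy
`ρ_v(x) ≤ e^ε · ρ_{v'}(x)`. -/
theorem sw_ldp (ε : ℝ) (hε : 0 < ε)
    (b p q : ℝ)
    (hb : b = (ε * exp ε - exp ε + 1) / (2 * exp ε * (exp ε - ε - 1)))
    (hp : p = exp ε / (2 * b * exp ε + 1))
    (hq : q = 1 / (2 * b * exp ε + 1))
    (ρ : ℝ → ℝ → ℝ)
    (hρ : ∀ v x, ρ v x =
      if x ∈ Set.Icc (v - b) (v + b) then p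
      else if x ∈ Set.Icc (-b) (1 + b) then q else 0) :
    ∀ v ∈ Set.Icc (0 : ℝ) 1, ∀ v' ∈ Set.Icc (0 : ℝ) 1, ∀ x ∈ Set.Icc (-b) (1 + b),
      ρ v x ≤ exp ε * ρ v' x := by
  have hE : 1 < exp ε := by
    have := Real.add_one_lt_exp hε.ne'
    linarith
  have h1 : 0 < exp ε - ε - 1 := by
    have := Real.add_one_lt_exp hε.ne'
    linarith
  have h2 : 0 ≤ ε * exp ε - exp ε + 1 := by
    have h3 := Real.add_one_le_exp (-ε)
    have h4 : exp (-ε) * exp ε = 1 := by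
      rw [← Real.exp_add]; simp
    nlinarith [Real.exp_pos ε]
  have hb0 : 0 ≤ b := by
    rw [hb]; positivity
  have hq0 : 0 < q := by
    rw [hq]; positivity
  have hpq : p = exp ε * q := by
    rw [hp, hq]; ring
  intro v _ v' _ x hx
  rw [hρ, hρ, if_pos hx, hpq]
  have h5 : q ≤ exp ε * q := by nlinarith
  have h6 : exp ε * q ≤ exp ε * (exp ε * q) := by nlinarith
  split_ifs <;> linarith
end

section
/- The SR mechanism satisfies ε-local differential privacy: for every ε > 0 and all inputs v, v' ∈ [−1,1], both p(v) ≤ e^ε · p(v') and 1 − p(v) ≤ e^ε · (1 − p(v')). -/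
open Real

/-- The SR mechanism satisfies `ε`-local differential privacy: for all inputs
`v, v' ∈ [−1,1]`, both `p(v) ≤ e^ε · p(v')` and `1 − p(v) ≤ e^ε · (1 − p(v'))`. -/
theorem sr_ldp (ε : ℝ) (hε : 0 < ε)
    (p : ℝ → ℝ) (hp : ∀ v, p v = (exp ε - 1) / (2 * exp ε + 2) * v + 1 / 2) :
    ∀ v ∈ Set.Icc (-1 : ℝ) 1, ∀ v' ∈ Set.Icc (-1 : ℝ) 1,
      p v ≤ exp ε * p v' ∧ 1 - p v ≤ exp ε * (1 - p v') := by
  rintro v ⟨h1, h2⟩ w ⟨h3, h4⟩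
  have hE : 1 < exp ε := Real.one_lt_exp_iff.mpr hε
  rw [hp v, hp w]
  generalize exp ε = E at *
  have hc : (E - 1) / (2 * E + 2) * (2 * E + 2) = E - 1 :=
    div_mul_cancel₀ _ (by linarith)
  have hc0 : 0 ≤ (E - 1) / (2 * E + 2) :=
    div_nonneg (by linarith) (by linarith)
  generalize (E - 1) / (2 * E + 2) = c at *
  have a1 : 0 ≤ c * (1 - v) := mul_nonneg hc0 (by linarith)
  have a2 : 0 ≤ c * (v + 1) := mul_nonneg hc0 (by linarith)
  have hEc : 0 ≤ E * c := mul_nonneg (by linarith) hc0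
  have a3 : 0 ≤ E * c * (1 - w) := mul_nonneg hEc (by linarith)
  have a4 : 0 ≤ E * c * (w + 1) := mul_nonneg hEc (by linarith)
  constructor <;> nlinarith
end

section
/- For every ε > 0 and every v ∈ [−1,1], the PM mechanism is unbiased: ∫_{−C}^{l(v)} x·ρ₂ dx + ∫_{l(v)}^{r(v)} x·ρ₁ dx + ∫_{r(v)}^{C} x·ρ₂ dx = v, where ρ₁ = (e^ε − e^{ε/2})/(2(e^{ε/2}+1)) and ρ₂ = (e^{ε/2}−1)/(2(e^{ε/2}+e^ε)). -/
open Real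

/-- The PM mechanism is unbiased:
`∫_{−C}^{l(v)} x·ρ₂ dx + ∫_{l(v)}^{r(v)} x·ρ₁ dx + ∫_{r(v)}^{C} x·ρ₂ dx = v`. -/
theorem pm_unbiased (ε : ℝ) (hε : 0 < ε) (v : ℝ) (hv : v ∈ Set.Icc (-1 : ℝ) 1)
    (C l r ρ₁ ρ₂ : ℝ)
    (hC : C = (exp (ε / 2) + 1) / (exp (ε / 2) - 1))
    (hl : l = (C + 1) / 2 * v - (C - 1) / 2)
    (hr : r = l + C - 1)
    (hρ₁ : ρ₁ = (exp ε - exp (ε / 2)) / (2 * (exp (ε / 2) + 1)))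
    (hρ₂ : ρ₂ = (exp (ε / 2) - 1) / (2 * (exp (ε / 2) + exp ε))) :
    (∫ x in (-C)..l, x * ρ₂) + (∫ x in l..r, x * ρ₁) + (∫ x in r..C, x * ρ₂) = v := by
  have h1 : 1 < exp (ε / 2) := Real.one_lt_exp_iff.mpr (by linarith)
  have h2 : exp ε = exp (ε / 2) ^ 2 := by
    rw [sq, ← Real.exp_add]; congr 1; ring
  rw [h2] at hρ₁ hρ₂
  generalize exp (ε / 2) = s at *
  have e1 : s - 1 ≠ 0 := by intro h; linarith
  have e2 : s + 1 ≠ 0 := by intro h; linarith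
  have e3 : s ≠ 0 := by intro h; linarith
  have hd : ρ₁ - ρ₂ = (s - 1) ^ 2 / (2 * s) := by
    have e4 : s + s ^ 2 = s * (s + 1) := by ring
    rw [hρ₁, hρ₂, e4]; field_simp; ring
  have hc : (C - 1) * (C + 1) = 4 * s / (s - 1) ^ 2 := by
    rw [hC]; field_simp; ring
  have hp : (ρ₁ - ρ₂) * ((C - 1) * (C + 1)) = 2 := by
    rw [hd, hc]; field_simp; norm_num
  simp only [intervalIntegral.integral_mul_const, integral_id]
  rw [hr, hl]
  linear_combination (v / 2) * hp
end

section
/- For every ε > 0 and every v ∈ [−1,1], if X is a real random variable distributed according to the PM density with input v, then Var(X) = v²/(e^{ε/2} − 1) + (e^{ε/2} + 3)/(3(e^{ε/2} − 1)²). -/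
open Real MeasureTheory ProbabilityTheory

theorem pm_key (C l r a b : ℝ) (hlr : l ≤ r) (hCl : -C ≤ l) (hrC : r ≤ C) (ha : 0 ≤ a) (hb : 0 ≤ b)
    (g : ℝ → ℝ) (hg : Continuous g) :
    ∫ x, g x ∂((volume : Measure ℝ).withDensity (fun x => ENNReal.ofReal
        (if x ∈ Set.Icc l r then a
         else if x ∈ Set.Icc (-C) C then b else 0))) =
      b * (∫ x in (-C)..C, g x) + (a - b) * ∫ x in l..r, g x := by
  have hm : Measurable (fun x : ℝ => ENNReal.ofReal
        (if x ∈ Set.Icc l r then a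
         else if x ∈ Set.Icc (-C) C then b else 0)) :=
    (Measurable.ite measurableSet_Icc measurable_const
      (Measurable.ite measurableSet_Icc measurable_const measurable_const)).ennreal_ofReal
  rw [integral_withDensity_eq_integral_toReal_smul hm (by simp)]
  have h : ∀ x : ℝ, (ENNReal.ofReal
        (if x ∈ Set.Icc l r then a
         else if x ∈ Set.Icc (-C) C then b else 0)).toReal • g x =
      (Set.Icc (-C) C).indicator (fun x => b * g x) x
        + (Set.Icc l r).indicator (fun x => (a - b) * g x) x := by
    intro x
    by_cases h1 : x ∈ Set.Icc l r
    · have h2 : x ∈ Set.Icc (-C) C := ⟨hCl.trans h1.1, h1.2.trans hrC⟩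
      rw [if_pos h1, Set.indicator_of_mem h1, Set.indicator_of_mem h2, ENNReal.toReal_ofReal ha]
      simp only [smul_eq_mul]; ring
    · rw [if_neg h1, Set.indicator_of_notMem h1]
      by_cases h2 : x ∈ Set.Icc (-C) C
      · rw [if_pos h2, Set.indicator_of_mem h2, ENNReal.toReal_ofReal hb]
        simp
      · rw [if_neg h2, Set.indicator_of_notMem h2]
        simp
  simp_rw [h]
  rw [integral_add, integral_indicator measurableSet_Icc, integral_indicator measurableSet_Icc,
    integral_const_mul, integral_const_mul, integral_Icc_eq_integral_Ioc,
    integral_Icc_eq_integral_Ioc, intervalIntegral.integral_of_le hlr,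
    intervalIntegral.integral_of_le (by linarith)]
  · exact ((continuous_const.mul hg).integrableOn_Icc).integrable_indicator measurableSet_Icc
  · exact ((continuous_const.mul hg).integrableOn_Icc).integrable_indicator measurableSet_Icc

/-- Variance of the PM mechanism: if `X` is distributed according to the PM density with
input `v`, then `Var(X) = v²/(e^{ε/2} − 1) + (e^{ε/2} + 3)/(3(e^{ε/2} − 1)²)`. -/
theorem pm_variance {Ω : Type*} [MeasureSpace Ω]
    [IsProbabilityMeasure (volume : Measure Ω)]
    (ε : ℝ) (hε : 0 < ε) (v : ℝ) (hv : v ∈ Set.Icc (-1 : ℝ) 1)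
    (C l r ρ₁ ρ₂ : ℝ)
    (hC : C = (exp (ε / 2) + 1) / (exp (ε / 2) - 1))
    (hl : l = (C + 1) / 2 * v - (C - 1) / 2)
    (hr : r = l + C - 1)
    (hρ₁ : ρ₁ = (exp ε - exp (ε / 2)) / (2 * (exp (ε / 2) + 1)))
    (hρ₂ : ρ₂ = (exp (ε / 2) - 1) / (2 * (exp (ε / 2) + exp ε)))
    (X : Ω → ℝ)
    (hX : Measure.map X volume =
      (volume : Measure ℝ).withDensity (fun x => ENNReal.ofReal
        (if x ∈ Set.Icc l r then ρ₁
         else if x ∈ Set.Icc (-C) C then ρ₂ else 0))) :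
    variance X volume =
      v ^ 2 / (exp (ε / 2) - 1) + (exp (ε / 2) + 3) / (3 * (exp (ε / 2) - 1) ^ 2) := by
  have hs : 1 < exp (ε / 2) := by rw [Real.one_lt_exp_iff]; linarith
  have he : exp ε = exp (ε / 2) ^ 2 := by rw [← Real.exp_nat_mul]; congr 1; push_cast; ring
  rw [he] at hρ₁ hρ₂
  generalize exp (ε / 2) = s at *
  have hs1 : 0 < s - 1 := by linarith
  have hs1' : s - 1 ≠ 0 := hs1.ne'
  have hs2 : s + 1 ≠ 0 := by positivity
  have hs0 : s ≠ 0 := by positivity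
  have hs3 : s + s ^ 2 ≠ 0 := by positivity
  have hC1 : 1 < C := by rw [hC, lt_div_iff₀ hs1]; linarith
  obtain ⟨hv1, hv2⟩ := hv
  have ha : 0 ≤ ρ₁ := by
    rw [hρ₁]; apply div_nonneg <;> nlinarith
  have hb : 0 ≤ ρ₂ := by
    rw [hρ₂]; apply div_nonneg <;> nlinarith
  have key := pm_key C l r ρ₁ ρ₂ (by linarith) (by rw [hl]; nlinarith) (by rw [hr, hl]; nlinarith)
    ha hb
  rw [← hX] at key
  have hl' : l = (s * v - 1) / (s - 1) := by rw [hl, hC]; field_simp; ring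
  have hr' : r = (s * v + 1) / (s - 1) := by rw [hr, hl', hC]; field_simp; ring
  have hb' : ρ₂ = (s - 1) / (2 * s * (s + 1)) := by rw [hρ₂]; field_simp; ring
  have ha' : ρ₁ - ρ₂ = (s - 1) ^ 2 / (2 * s) := by
    rw [hρ₁, hb']; field_simp; ring
  have hXm : AEMeasurable X volume := by
    by_contra hn
    have h1 := key (fun _ => 1) continuous_const
    rw [Measure.map_of_not_aemeasurable hn] at h1
    simp only [integral_zero_measure, intervalIntegral.integral_const, smul_eq_mul] at h1
    have h3 : ρ₂ * ((C - -C) * 1) + (ρ₁ - ρ₂) * ((r - l) * 1) = 1 := by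
      rw [ha', hb', hl', hr', hC]; field_simp; ring
    rw [h3] at h1
    exact zero_ne_one h1
  have hE : ∫ ω, X ω = v := by
    have h1 := key (fun x => x) continuous_id
    rw [integral_map hXm (by fun_prop)] at h1
    rw [h1, integral_id, integral_id, ha', hb', hl', hr', hC]
    field_simp
    ring
  rw [variance_eq_integral hXm, hE]
  have h2 := key (fun x => (x - v) ^ 2) (by fun_prop)
  rw [integral_map hXm (by fun_prop)] at h2
  rw [h2, intervalIntegral.integral_comp_sub_right (fun x => x ^ 2),
    intervalIntegral.integral_comp_sub_right (fun x => x ^ 2), integral_pow, integral_pow]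
  have e1 : C - v = (s + 1 - (s - 1) * v) / (s - 1) := by rw [hC]; field_simp
  have e2 : -C - v = (-(s + 1) - (s - 1) * v) / (s - 1) := by rw [hC]; field_simp
  have e3 : l - v = (v - 1) / (s - 1) := by rw [hl']; field_simp; ring
  have e4 : r - v = (v + 1) / (s - 1) := by rw [hr']; field_simp; ring
  rw [e1, e2, e3, e4, ha', hb']
  norm_num only [div_pow]
  field_simp
  ring
end

section
/- The PM mechanism satisfies ε-local differential privacy with its two density levels in exact ratio e^ε: for every ε > 0, (e^ε − e^{ε/2})/(2(e^{ε/2}+1)) = e^ε · (e^{ε/2}−1)/(2(e^{ε/2}+e^ε)), and hence for all inputs v, v' ∈ [−1,1] and every output x ∈ [−C, C], ρ_v(x) ≤ e^ε · ρ_{v'}(x), where ρ_v denotes the PM density with input v. -/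
open Real

/-- The PM mechanism satisfies `ε`-local differential privacy, with its two density
levels in exact ratio `e^ε`: `ρ₁ = e^ε · ρ₂`, and for all inputs `v, v' ∈ [−1,1]` and
every output `x ∈ [−C, C]`, `ρ_v(x) ≤ e^ε · ρ_{v'}(x)`. -/
theorem pm_ldp (ε : ℝ) (hε : 0 < ε)
    (C ρ₁ ρ₂ : ℝ) (l r : ℝ → ℝ)
    (hC : C = (exp (ε / 2) + 1) / (exp (ε / 2) - 1))
    (hl : ∀ v, l v = (C + 1) / 2 * v - (C - 1) / 2)
    (hr : ∀ v, r v = l v + C - 1)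
    (hρ₁ : ρ₁ = (exp ε - exp (ε / 2)) / (2 * (exp (ε / 2) + 1)))
    (hρ₂ : ρ₂ = (exp (ε / 2) - 1) / (2 * (exp (ε / 2) + exp ε)))
    (ρ : ℝ → ℝ → ℝ)
    (hρ : ∀ v x, ρ v x =
      if x ∈ Set.Icc (l v) (r v) then ρ₁
      else if x ∈ Set.Icc (-C) C then ρ₂ else 0) :
    ρ₁ = exp ε * ρ₂ ∧
      ∀ v ∈ Set.Icc (-1 : ℝ) 1, ∀ v' ∈ Set.Icc (-1 : ℝ) 1, ∀ x ∈ Set.Icc (-C) C,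
        ρ v x ≤ exp ε * ρ v' x := by
  have h2 : exp ε = exp (ε / 2) * exp (ε / 2) := by
    rw [← exp_add]; congr 1; ring
  have ht : 1 < exp (ε / 2) := by
    rw [Real.one_lt_exp_iff]; linarith
  have hE : 1 < exp ε := by
    rw [Real.one_lt_exp_iff]; exact hε
  have heq : ρ₁ = exp ε * ρ₂ := by
    rw [hρ₁, hρ₂, h2]
    generalize exp (ε / 2) = t at ht
    have h3 : t + 1 ≠ 0 := by linarith
    have h4 : t + t * t ≠ 0 := by nlinarith
    field_simp
    ring
  have hpos : 0 < ρ₂ := by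
    rw [hρ₂]
    apply div_pos <;> linarith
  refine ⟨heq, ?_⟩
  intro v _ v' _ x hx
  rw [hρ v x, hρ v' x]
  simp only [if_pos hx]
  have h5 : ρ₂ ≤ ρ₁ := by rw [heq]; nlinarith
  split_ifs <;> nlinarith
end
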